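/- The parallel surface x* = x + ρ n of M satisfies Δ^{III} x* = Δ^{III} x + 2ρ n on U, where Δ^{III} is the second Beltrami operator of the common third fundamental form of M and its parallel surface. -/

import Mathlib

open Matrix

noncomputable section

/-- The parameter domain `ℝ²`. -/
abbrev Param : Type := Fin 2 → ℝ

/-- Vectors in Euclidean 3-space. -/
abbrev Vec3 : Type := Fin 3 → ℝ

/-- Partial derivative of a vector-valued function in the `i`-th coordinate direction. -/
noncomputable def pd (i : Fin 2) (f : Param → Vec3) (u : Param) : Vec3 :=
  fderiv ℝ f u (Pi.single i 1)

/-- Partial derivative of a scalar function in the `i`-th coordinate direction. -/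
noncomputable def pds (i : Fin 2) (f : Param → ℝ) (u : Param) : ℝ :=
  fderiv ℝ f u (Pi.single i 1)

/-- The Euclidean inner product on `ℝ³`. -/
def dot3 (a b : Vec3) : ℝ := ∑ k, a k * b k

/-- The Euclidean norm on `ℝ³`. -/
noncomputable def norm3 (a : Vec3) : ℝ := Real.sqrt (dot3 a a)

/-- The Gauss map `n = (x_{/1} × x_{/2}) / ‖x_{/1} × x_{/2}‖`. -/
noncomputable def gaussMap (x : Param → Vec3) (u : Param) : Vec3 :=
  (norm3 (crossProduct (pd 0 x u) (pd 1 x u)))⁻¹ • crossProduct (pd 0 x u) (pd 1 x u)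

/-- Components `g_{ij}` of the first fundamental form. -/
noncomputable def fformI (x : Param → Vec3) (u : Param) : Matrix (Fin 2) (Fin 2) ℝ :=
  Matrix.of fun i j => dot3 (pd i x u) (pd j x u)

/-- Components `b_{ij} = ⟨∂²x/∂u^i∂u^j, n⟩` of the second fundamental form. -/
noncomputable def fformII (x : Param → Vec3) (u : Param) : Matrix (Fin 2) (Fin 2) ℝ :=
  Matrix.of fun i j => dot3 (pd i (pd j x) u) (gaussMap x u)

/-- Components `e_{ij} = ⟨n_{/i}, n_{/j}⟩` of the third fundamental form. -/
noncomputable def fformIII (x : Param → Vec3) (u : Param) : Matrix (Fin 2) (Fin 2) ℝ :=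
  Matrix.of fun i j => dot3 (pd i (gaussMap x) u) (pd j (gaussMap x) u)

/-- The Gauss curvature `K = det(b_{ij}) / det(g_{ij})`. -/
noncomputable def gaussCurv (x : Param → Vec3) (u : Param) : ℝ :=
  (fformII x u).det / (fformI x u).det

/-- The mean curvature `H = (1/2) g^{ij} b_{ij}`. -/
noncomputable def meanCurv (x : Param → Vec3) (u : Param) : ℝ :=
  (1 / 2) * ∑ i, ∑ j, (fformI x u)⁻¹ i j * fformII x u i j

/-- First Beltrami operator `∇^J(φ, ψ) = a^{ij} φ_{/i} ψ_{/j}` with respect to the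
fundamental form with component matrix `a`, for scalar `φ` and `ℝ³`-valued `ψ`. -/
noncomputable def beltrami1 (a : Param → Matrix (Fin 2) (Fin 2) ℝ)
    (φ : Param → ℝ) (ψ : Param → Vec3) (u : Param) : Vec3 :=
  ∑ i, ∑ j, ((a u)⁻¹ i j * pds i φ u) • pd j ψ u

/-- Second Beltrami operator
`Δ^J f = −(1/√|det a|) ∂_i (√|det a| a^{ij} ∂_j f)` with respect to the fundamental
form with component matrix `a`, acting componentwise on `ℝ³`-valued functions. -/
noncomputable def beltrami2 (a : Param → Matrix (Fin 2) (Fin 2) ℝ)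
    (f : Param → Vec3) (u : Param) : Vec3 :=
  -((Real.sqrt |(a u).det|)⁻¹ •
    ∑ i, ∑ j, pd i (fun v => (Real.sqrt |(a v).det| * (a v)⁻¹ i j) • pd j f v) u)

/-- `x` is an immersion on `U`: the partial derivatives are linearly independent. -/
def Immersed (x : Param → Vec3) (U : Set Param) : Prop :=
  ∀ u ∈ U, LinearIndependent ℝ ![pd 0 x u, pd 1 x u]

/-- `f` is nonconstant on `U`. -/
def NonconstOn (f : Param → Vec3) (U : Set Param) : Prop :=
  ¬ ∃ v : Vec3, ∀ u ∈ U, f u = v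

/-!
The third fundamental form of `x` is the first fundamental form of its Gauss map `n`, which is an
immersion into the unit sphere because there are no parabolic points. By linearity of `Δ^{III}` the
theorem therefore reduces to the fact that the position vector `n` of the unit sphere is an
eigenvector of the Laplacian: `Δ^{III} n = 2 n`.

For an immersion `y` with unit normal `N`, the vector triple product identity turns the fluxes
`√(det g) g^{ij} y_{/j}` into `y_{/2} × N` and `N × y_{/1}`, so the second derivatives of `y` cancel
in `∂_i (√(det g) g^{ij} y_{/j})` and `y_{/2} × N_{/1} + N_{/2} × y_{/1}` remains. On the sphere
`N = ± y` with a locally constant sign, and this is `-2 √(det g) y`.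
-/

open Filter Topology

section Bilinear

variable {D E F G : Type*} [NormedAddCommGroup D] [NormedSpace ℝ D]
  [NormedAddCommGroup E] [NormedSpace ℝ E] [FiniteDimensional ℝ E]
  [NormedAddCommGroup F] [NormedSpace ℝ F] [FiniteDimensional ℝ F]
  [NormedAddCommGroup G] [NormedSpace ℝ G]
  (B : E →ₗ[ℝ] F →ₗ[ℝ] G) {f : D → E} {g : D → F} {u : D}

lemma contDiffAt_bilinear {m : WithTop ℕ∞} (hf : ContDiffAt ℝ m f u) (hg : ContDiffAt ℝ m g u) :
    ContDiffAt ℝ m (fun v => B (f v) (g v)) u :=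
  B.toContinuousBilinearMap.isBoundedBilinearMap.contDiff.contDiffAt.comp u (hf.prodMk hg)

lemma fderiv_bilinear_apply (hf : DifferentiableAt ℝ f u) (hg : DifferentiableAt ℝ g u) (w : D) :
    fderiv ℝ (fun v => B (f v) (g v)) u w =
      B (fderiv ℝ f u w) (g u) + B (f u) (fderiv ℝ g u w) := by
  have hB : fderiv ℝ (fun v => B (f v) (g v)) u = _ :=
    B.toContinuousBilinearMap.fderiv_of_bilinear hf hg
  simp [hB, add_comm]

end Bilinear

section PartialDerivatives

variable {f g : Param → Vec3} {u : Param} {m k : WithTop ℕ∞}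

lemma contDiffAt_pd (hf : ContDiffAt ℝ k f u) (hmk : m + 1 ≤ k) (i : Fin 2) :
    ContDiffAt ℝ m (pd i f) u :=
  (hf.fderiv_right hmk).clm_apply contDiffAt_const

lemma contDiffAt_dot3 (hf : ContDiffAt ℝ m f u) (hg : ContDiffAt ℝ m g u) :
    ContDiffAt ℝ m (fun v => dot3 (f v) (g v)) u :=
  contDiffAt_bilinear (dotProductBilin ℝ ℝ) hf hg

lemma contDiffAt_cross (hf : ContDiffAt ℝ m f u) (hg : ContDiffAt ℝ m g u) :
    ContDiffAt ℝ m (fun v => f v ⨯₃ g v) u :=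
  contDiffAt_bilinear crossProduct hf hg

lemma pd_congr (h : f =ᶠ[𝓝 u] g) (i : Fin 2) : pd i f u = pd i g u := by
  simp only [pd, h.fderiv_eq]

lemma pd_add (hf : DifferentiableAt ℝ f u) (hg : DifferentiableAt ℝ g u) (i : Fin 2) :
    pd i (fun v => f v + g v) u = pd i f u + pd i g u := by
  simp [pd, fderiv_fun_add hf hg]

lemma pd_const_smul (c : ℝ) (f : Param → Vec3) (i : Fin 2) (u : Param) :
    pd i (fun v => c • f v) u = c • pd i f u := by
  change fderiv ℝ (c • f) u _ = _
  rw [fderiv_const_smul_field]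
  rfl

lemma pd_cross (hf : DifferentiableAt ℝ f u) (hg : DifferentiableAt ℝ g u) (i : Fin 2) :
    pd i (fun v => f v ⨯₃ g v) u = pd i f u ⨯₃ g u + f u ⨯₃ pd i g u :=
  fderiv_bilinear_apply crossProduct hf hg _

lemma pds_dot3 (hf : DifferentiableAt ℝ f u) (hg : DifferentiableAt ℝ g u) (i : Fin 2) :
    pds i (fun v => dot3 (f v) (g v)) u = dot3 (pd i f u) (g u) + dot3 (f u) (pd i g u) :=
  fderiv_bilinear_apply (dotProductBilin ℝ ℝ) hf hg _

lemma pd_pd_comm (hf : ContDiffAt ℝ 2 f u) (i j : Fin 2) :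
    pd i (pd j f) u = pd j (pd i f) u := by
  have hf' : DifferentiableAt ℝ (fderiv ℝ f) u :=
    (hf.fderiv_right (m := 1) (by norm_num)).differentiableAt one_ne_zero
  have pd_pd_eq (i j : Fin 2) :
      pd i (pd j f) u = fderiv ℝ (fderiv ℝ f) u (Pi.single i 1) (Pi.single j 1) := by
    change fderiv ℝ (fun v => fderiv ℝ f v (Pi.single j 1)) u _ = _
    simp [fderiv_clm_apply hf' (differentiableAt_const _)]
  rw [pd_pd_eq, pd_pd_eq]
  exact hf.isSymmSndFDerivAt (by simp) _ _

lemma dot3_pd_left_of_eventually_const {c : ℝ} (hf : DifferentiableAt ℝ f u)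
    (hg : DifferentiableAt ℝ g u) (hc : ∀ᶠ v in 𝓝 u, dot3 (f v) (g v) = c) (i : Fin 2) :
    dot3 (pd i f u) (g u) = -dot3 (f u) (pd i g u) := by
  have hzero : pds i (fun v => dot3 (f v) (g v)) u = 0 := by
    have hconst : (fun v => dot3 (f v) (g v)) =ᶠ[𝓝 u] fun _ => c := hc
    simp [pds, hconst.fderiv_eq]
  rw [pds_dot3 hf hg] at hzero
  linarith

end PartialDerivatives

section EuclideanAlgebra

lemma dot3_eq_dotProduct (a b : Vec3) : dot3 a b = a ⬝ᵥ b := rfl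

lemma dot3_smul_self (c : ℝ) (a : Vec3) : dot3 (c • a) (c • a) = c ^ 2 * dot3 a a := by
  simp only [dot3_eq_dotProduct, smul_dotProduct, dotProduct_smul, smul_eq_mul]
  ring

lemma norm3_sq (a : Vec3) : norm3 a ^ 2 = dot3 a a :=
  Real.sq_sqrt (Finset.sum_nonneg fun _ _ => mul_self_nonneg _)

lemma norm3_ne_zero {a : Vec3} (ha : a ≠ 0) : norm3 a ≠ 0 := by
  rw [← pow_ne_zero_iff two_ne_zero, norm3_sq]
  exact dotProduct_self_eq_zero.not.mpr ha

lemma eq_dot3_smul_of_cross_eq_zero {n c : Vec3} (hn : dot3 n n = 1) (hc : n ⨯₃ c = 0) :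
    c = dot3 c n • n := by
  have h := cross_cross_eq_smul_sub_smul n c n
  rw [← dot3_eq_dotProduct, ← dot3_eq_dotProduct, hn, hc] at h
  simpa [sub_eq_zero] using h.symm

lemma cross_cross_eq_zero_of_orthogonal {n a b : Vec3} (ha : dot3 a n = 0) (hb : dot3 b n = 0) :
    n ⨯₃ (a ⨯₃ b) = 0 := by
  rw [dot3_eq_dotProduct] at ha hb
  simp [cross_cross_eq_smul_sub_smul', dotProduct_comm n b, ha, hb]

end EuclideanAlgebra

section BeltramiOperator

/-- The densitized inverse `√|det a| a^{ij}` of the component matrix `a`: the coefficients under the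
outer derivative in the second Beltrami operator. -/
def beltramiCoeff (a : Param → Matrix (Fin 2) (Fin 2) ℝ) (i j : Fin 2) (v : Param) : ℝ :=
  Real.sqrt |(a v).det| * (a v)⁻¹ i j

variable {a : Param → Matrix (Fin 2) (Fin 2) ℝ} {f g : Param → Vec3} {u : Param}

lemma differentiableAt_beltramiCoeff (ha : ∀ i j, DifferentiableAt ℝ (fun v => a v i j) u)
    (hdet : (a u).det ≠ 0) (i j : Fin 2) : DifferentiableAt ℝ (beltramiCoeff a i j) u := by
  have hdet' : DifferentiableAt ℝ (fun v => (a v).det) u := by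
    simp only [det_fin_two]
    exact ((ha 0 0).mul (ha 1 1)).sub ((ha 0 1).mul (ha 1 0))
  have hadj : DifferentiableAt ℝ (fun v => (a v).adjugate i j) u := by
    simp only [adjugate_fin_two]
    fin_cases i <;> fin_cases j
    exacts [ha 1 1, (ha 0 1).neg, (ha 1 0).neg, ha 0 0]
  have hsqrt : DifferentiableAt ℝ (fun v => Real.sqrt |(a v).det|) u :=
    (hdet'.abs hdet).sqrt (abs_ne_zero.mpr hdet)
  refine hsqrt.mul ?_
  simp only [inv_def, Ring.inverse_eq_inv', Matrix.smul_apply, smul_eq_mul]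
  exact (hdet'.inv hdet).mul hadj

lemma differentiableAt_beltramiCoeff_smul_pd
    (ha : ∀ i j, DifferentiableAt ℝ (fun v => a v i j) u) (hdet : (a u).det ≠ 0)
    (hf : ContDiffAt ℝ 2 f u) (i j : Fin 2) :
    DifferentiableAt ℝ (fun v => beltramiCoeff a i j v • pd j f v) u :=
  (differentiableAt_beltramiCoeff ha hdet i j).smul
    ((contDiffAt_pd (m := 1) hf (by norm_num) j).differentiableAt one_ne_zero)

lemma beltrami2_eq_sum_pd_sum (ha : ∀ i j, DifferentiableAt ℝ (fun v => a v i j) u)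
    (hdet : (a u).det ≠ 0) (hf : ContDiffAt ℝ 2 f u) :
    beltrami2 a f u = -((Real.sqrt |(a u).det|)⁻¹ •
      ∑ i, pd i (fun v => ∑ j, beltramiCoeff a i j v • pd j f v) u) := by
  have hflux := differentiableAt_beltramiCoeff_smul_pd ha hdet hf
  simp only [Fin.sum_univ_two, pd_add (hflux _ 0) (hflux _ 1)]
  simp only [beltrami2, beltramiCoeff, Fin.sum_univ_two]

lemma beltrami2_add (ha : ∀ i j, DifferentiableAt ℝ (fun v => a v i j) u)
    (hdet : (a u).det ≠ 0) (hf : ContDiffAt ℝ 2 f u) (hg : ContDiffAt ℝ 2 g u) :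
    beltrami2 a (fun v => f v + g v) u = beltrami2 a f u + beltrami2 a g u := by
  have hpd (i j : Fin 2) :
      pd i (fun v => beltramiCoeff a i j v • pd j (fun w => f w + g w) v) u =
        pd i (fun v => beltramiCoeff a i j v • pd j f v) u +
          pd i (fun v => beltramiCoeff a i j v • pd j g v) u := by
    rw [← pd_add (differentiableAt_beltramiCoeff_smul_pd ha hdet hf i j)
      (differentiableAt_beltramiCoeff_smul_pd ha hdet hg i j)]
    refine pd_congr ?_ i
    filter_upwards [hf.eventually (by simp), hg.eventually (by simp)] with v hfv hgv
    rw [pd_add (hfv.differentiableAt two_ne_zero) (hgv.differentiableAt two_ne_zero), smul_add]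
  simp only [beltramiCoeff] at hpd
  simp only [beltrami2, hpd, Finset.sum_add_distrib, smul_add, neg_add]

lemma beltrami2_const_smul (a : Param → Matrix (Fin 2) (Fin 2) ℝ) (c : ℝ) (f : Param → Vec3)
    (u : Param) : beltrami2 a (fun v => c • f v) u = c • beltrami2 a f u := by
  simp only [beltrami2, pd_const_smul, smul_comm _ c, ← Finset.smul_sum, smul_neg]

end BeltramiOperator

section GaussMap

variable {y : Param → Vec3} {u : Param}

lemma contDiffAt_gaussMap {m k : WithTop ℕ∞} (hy : ContDiffAt ℝ k y u) (hmk : m + 1 ≤ k)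
    (himm : LinearIndependent ℝ ![pd 0 y u, pd 1 y u]) : ContDiffAt ℝ m (gaussMap y) u := by
  have hcross : ContDiffAt ℝ m (fun v => pd 0 y v ⨯₃ pd 1 y v) u :=
    contDiffAt_cross (contDiffAt_pd hy hmk 0) (contDiffAt_pd hy hmk 1)
  have hne : norm3 (pd 0 y u ⨯₃ pd 1 y u) ≠ 0 :=
    norm3_ne_zero (crossProduct_ne_zero_iff_linearIndependent.mpr himm)
  have hnorm : ContDiffAt ℝ m (fun v => norm3 (pd 0 y v ⨯₃ pd 1 y v)) u :=
    (contDiffAt_dot3 hcross hcross).sqrt (Real.sqrt_ne_zero'.mp hne).ne'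
  exact (hnorm.inv hne).smul hcross

lemma dot3_gaussMap_self (himm : LinearIndependent ℝ ![pd 0 y u, pd 1 y u]) :
    dot3 (gaussMap y u) (gaussMap y u) = 1 := by
  have hne := norm3_ne_zero (crossProduct_ne_zero_iff_linearIndependent.mpr himm)
  rw [gaussMap, dot3_smul_self, ← norm3_sq, ← mul_pow, inv_mul_cancel₀ hne, one_pow]

lemma dot3_pd_gaussMap (y : Param → Vec3) (u : Param) (i : Fin 2) :
    dot3 (pd i y u) (gaussMap y u) = 0 := by
  rw [gaussMap, dot3_eq_dotProduct, dotProduct_smul]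
  fin_cases i <;> simp

lemma eventually_linearIndependent_pd (hy : ContDiffAt ℝ 1 y u)
    (himm : LinearIndependent ℝ ![pd 0 y u, pd 1 y u]) :
    ∀ᶠ v in 𝓝 u, LinearIndependent ℝ ![pd 0 y v, pd 1 y v] := by
  have hpd (i : Fin 2) : ContDiffAt ℝ 0 (pd i y) u := contDiffAt_pd hy (by simp) i
  have hcross : ContinuousAt (fun v => pd 0 y v ⨯₃ pd 1 y v) u :=
    (contDiffAt_cross (hpd 0) (hpd 1)).continuousAt
  simp only [← crossProduct_ne_zero_iff_linearIndependent] at himm ⊢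
  exact hcross.eventually_ne himm

end GaussMap

section FirstFundamentalForm

variable {y : Param → Vec3} {u : Param}

lemma det_fformI (y : Param → Vec3) (u : Param) :
    (fformI y u).det = norm3 (pd 0 y u ⨯₃ pd 1 y u) ^ 2 := by
  rw [norm3_sq, dot3_eq_dotProduct, cross_dot_cross, det_fin_two]
  rfl

lemma det_fformI_ne_zero (himm : LinearIndependent ℝ ![pd 0 y u, pd 1 y u]) :
    (fformI y u).det ≠ 0 := by
  rw [det_fformI]
  exact pow_ne_zero 2 (norm3_ne_zero (crossProduct_ne_zero_iff_linearIndependent.mpr himm))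

lemma sqrt_abs_det_fformI (y : Param → Vec3) (u : Param) :
    Real.sqrt |(fformI y u).det| = norm3 (pd 0 y u ⨯₃ pd 1 y u) := by
  rw [det_fformI, abs_sq, norm3, Real.sqrt_sq (Real.sqrt_nonneg _)]

lemma differentiableAt_fformI (hy : ContDiffAt ℝ 2 y u) (i j : Fin 2) :
    DifferentiableAt ℝ (fun v => fformI y v i j) u := by
  have hpd (i : Fin 2) : ContDiffAt ℝ 1 (pd i y) u := contDiffAt_pd hy (by norm_num) i
  exact (contDiffAt_dot3 (hpd i) (hpd j)).differentiableAt one_ne_zero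

-- Where `y` is not immersed, both sides vanish because `0⁻¹ = 0`.
lemma beltramiCoeff_fformI (y : Param → Vec3) (i j : Fin 2) (v : Param) :
    beltramiCoeff (fformI y) i j v =
      (norm3 (pd 0 y v ⨯₃ pd 1 y v))⁻¹ * (fformI y v).adjugate i j := by
  rw [beltramiCoeff, sqrt_abs_det_fformI, inv_def, Ring.inverse_eq_inv', det_fformI,
    Matrix.smul_apply, smul_eq_mul, ← mul_assoc]
  congr 1
  field_simp

lemma sum_beltramiCoeff_fformI_zero_smul_pd (y : Param → Vec3) (v : Param) :
    ∑ j, beltramiCoeff (fformI y) 0 j v • pd j y v = pd 1 y v ⨯₃ gaussMap y v := by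
  simp only [beltramiCoeff_fformI, Fin.sum_univ_two, gaussMap, map_smul,
    cross_cross_eq_smul_sub_smul', adjugate_fin_two, fformI, dot3_eq_dotProduct, of_apply,
    cons_val_zero, cons_val_one, cons_val', cons_val_fin_one]
  module

lemma sum_beltramiCoeff_fformI_one_smul_pd (y : Param → Vec3) (v : Param) :
    ∑ j, beltramiCoeff (fformI y) 1 j v • pd j y v = gaussMap y v ⨯₃ pd 0 y v := by
  simp only [beltramiCoeff_fformI, Fin.sum_univ_two, gaussMap, map_smul, LinearMap.smul_apply,
    cross_cross_eq_smul_sub_smul, adjugate_fin_two, fformI, dot3_eq_dotProduct, of_apply,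
    cons_val_zero, cons_val_one, cons_val', cons_val_fin_one]
  module

lemma beltrami2_fformI_self (hy : ContDiffAt ℝ 2 y u)
    (himm : LinearIndependent ℝ ![pd 0 y u, pd 1 y u]) :
    beltrami2 (fformI y) y u = -((norm3 (pd 0 y u ⨯₃ pd 1 y u))⁻¹ •
      (pd 1 y u ⨯₃ pd 0 (gaussMap y) u + pd 1 (gaussMap y) u ⨯₃ pd 0 y u)) := by
  have hpd (i : Fin 2) : DifferentiableAt ℝ (pd i y) u :=
    (contDiffAt_pd (m := 1) hy (by norm_num) i).differentiableAt one_ne_zero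
  have hN : DifferentiableAt ℝ (gaussMap y) u :=
    (contDiffAt_gaussMap (m := 1) hy (by norm_num) himm).differentiableAt one_ne_zero
  have hcancel : pd 0 (pd 1 y) u ⨯₃ gaussMap y u + gaussMap y u ⨯₃ pd 1 (pd 0 y) u = 0 := by
    rw [pd_pd_comm hy 0 1, cross_anticomm']
  rw [beltrami2_eq_sum_pd_sum (differentiableAt_fformI hy) (det_fformI_ne_zero himm) hy,
    sqrt_abs_det_fformI]
  simp only [Fin.sum_univ_two (fun i => pd i _ u), sum_beltramiCoeff_fformI_zero_smul_pd,
    sum_beltramiCoeff_fformI_one_smul_pd, pd_cross (hpd 1) hN, pd_cross hN (hpd 0)]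
  congr 2
  linear_combination (exp := 1) hcancel

end FirstFundamentalForm

section UnitSphere

variable {n : Param → Vec3} {u : Param}

lemma eventually_eq_of_sq_eq_one {X : Type*} [TopologicalSpace X] {c : X → ℝ} {p : X}
    (hc : ContinuousAt c p) (hsq : ∀ᶠ q in 𝓝 p, c q ^ 2 = 1) : ∀ᶠ q in 𝓝 p, c q = c p := by
  have hp : c p ≠ -c p := by
    intro h
    have := hsq.self_of_nhds
    rw [self_eq_neg.mp h] at this
    norm_num at this
  filter_upwards [hsq, hc.eventually_ne hp] with q hq hne
  exact (sq_eq_sq_iff_eq_or_eq_neg.mp (hq.trans hsq.self_of_nhds.symm)).resolve_right hne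

lemma dot3_pd_self_of_eventually_unit (hn : DifferentiableAt ℝ n u)
    (hunit : ∀ᶠ v in 𝓝 u, dot3 (n v) (n v) = 1) (i : Fin 2) : dot3 (pd i n u) (n u) = 0 := by
  have h := dot3_pd_left_of_eventually_const hn hn hunit i
  rwa [dot3_eq_dotProduct (n u), dotProduct_comm, ← dot3_eq_dotProduct, self_eq_neg] at h

lemma gaussMap_eq_smul_self_of_eventually_unit (hn : DifferentiableAt ℝ n u)
    (hunit : ∀ᶠ v in 𝓝 u, dot3 (n v) (n v) = 1) :
    gaussMap n u = dot3 (gaussMap n u) (n u) • n u := by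
  have horth := dot3_pd_self_of_eventually_unit hn hunit
  refine eq_dot3_smul_of_cross_eq_zero hunit.self_of_nhds ?_
  rw [gaussMap, map_smul, cross_cross_eq_zero_of_orthogonal (horth 0) (horth 1), smul_zero]

lemma dot3_gaussMap_sq_of_eventually_unit (hn : DifferentiableAt ℝ n u)
    (hunit : ∀ᶠ v in 𝓝 u, dot3 (n v) (n v) = 1)
    (himm : LinearIndependent ℝ ![pd 0 n u, pd 1 n u]) : dot3 (gaussMap n u) (n u) ^ 2 = 1 := by
  have h := dot3_gaussMap_self himm
  rwa [gaussMap_eq_smul_self_of_eventually_unit hn hunit, dot3_smul_self, hunit.self_of_nhds,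
    mul_one] at h

lemma gaussMap_eventuallyEq_const_smul_of_eventually_unit (hn : ContDiffAt ℝ 2 n u)
    (hunit : ∀ᶠ v in 𝓝 u, dot3 (n v) (n v) = 1)
    (himm : LinearIndependent ℝ ![pd 0 n u, pd 1 n u]) :
    ∃ σ : ℝ, σ ^ 2 = 1 ∧ gaussMap n =ᶠ[𝓝 u] fun v => σ • n v := by
  have hn₁ : ContDiffAt ℝ 1 n u := hn.of_le one_le_two
  have hdiff : ∀ᶠ v in 𝓝 u, DifferentiableAt ℝ n v :=
    (hn₁.eventually (by simp)).mono fun _ hv => hv.differentiableAt one_ne_zero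
  have hcont : ContinuousAt (fun v => dot3 (gaussMap n v) (n v)) u :=
    (contDiffAt_dot3 (contDiffAt_gaussMap hn (by norm_num) himm) hn₁).continuousAt
  have hsq : ∀ᶠ v in 𝓝 u, dot3 (gaussMap n v) (n v) ^ 2 = 1 := by
    filter_upwards [hdiff, hunit.eventually_nhds, eventually_linearIndependent_pd hn₁ himm]
      with v using dot3_gaussMap_sq_of_eventually_unit
  refine ⟨dot3 (gaussMap n u) (n u), hsq.self_of_nhds, ?_⟩
  filter_upwards [hdiff, hunit.eventually_nhds, eventually_eq_of_sq_eq_one hcont hsq]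
    with v hv hunitv hsign
  rw [← hsign]
  exact gaussMap_eq_smul_self_of_eventually_unit hv hunitv

lemma beltrami2_fformI_of_eventually_unit (hn : ContDiffAt ℝ 2 n u)
    (hunit : ∀ᶠ v in 𝓝 u, dot3 (n v) (n v) = 1)
    (himm : LinearIndependent ℝ ![pd 0 n u, pd 1 n u]) :
    beltrami2 (fformI n) n u = (2 : ℝ) • n u := by
  obtain ⟨σ, hσ, hN⟩ := gaussMap_eventuallyEq_const_smul_of_eventually_unit hn hunit himm
  have hpdN (i : Fin 2) : pd i (gaussMap n) u = σ • pd i n u := by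
    rw [pd_congr hN, pd_const_smul]
  calc beltrami2 (fformI n) n u
      = (2 * σ) • gaussMap n u := by
        rw [beltrami2_fformI_self hn himm, hpdN, hpdN, map_smul, LinearMap.map_smul₂,
          ← cross_anticomm (pd 0 n u), gaussMap]
        module
    _ = (2 * σ ^ 2) • n u := by rw [hN.self_of_nhds]; module
    _ = (2 : ℝ) • n u := by rw [hσ, mul_one]

end UnitSphere

section ThirdFundamentalForm

variable {x : Param → Vec3} {u : Param}

lemma fformIII_eq_fformI_gaussMap (x : Param → Vec3) : fformIII x = fformI (gaussMap x) := rfl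

lemma fformII_apply_eq_neg_dot3 (hx : ContDiffAt ℝ 2 x u)
    (himm : LinearIndependent ℝ ![pd 0 x u, pd 1 x u]) (i j : Fin 2) :
    fformII x u i j = -dot3 (pd j x u) (pd i (gaussMap x) u) := by
  have hpd : ContDiffAt ℝ 1 (pd j x) u := contDiffAt_pd hx (by norm_num) j
  have hN : ContDiffAt ℝ 1 (gaussMap x) u := contDiffAt_gaussMap hx (by norm_num) himm
  exact dot3_pd_left_of_eventually_const (hpd.differentiableAt one_ne_zero)
    (hN.differentiableAt one_ne_zero) (.of_forall fun v => dot3_pd_gaussMap x v j) i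

lemma det_fformII_eq_dot3_cross (hx : ContDiffAt ℝ 2 x u)
    (himm : LinearIndependent ℝ ![pd 0 x u, pd 1 x u]) :
    (fformII x u).det = dot3 (pd 0 x u ⨯₃ pd 1 x u)
      (pd 0 (gaussMap x) u ⨯₃ pd 1 (gaussMap x) u) := by
  rw [dot3_eq_dotProduct, cross_dot_cross, det_fin_two]
  simp only [fformII_apply_eq_neg_dot3 hx himm, dot3_eq_dotProduct]
  ring

lemma linearIndependent_pd_gaussMap (hx : ContDiffAt ℝ 2 x u)
    (himm : LinearIndependent ℝ ![pd 0 x u, pd 1 x u]) (hpar : (fformII x u).det ≠ 0) :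
    LinearIndependent ℝ ![pd 0 (gaussMap x) u, pd 1 (gaussMap x) u] := by
  rw [← crossProduct_ne_zero_iff_linearIndependent]
  intro hzero
  rw [det_fformII_eq_dot3_cross hx himm, hzero] at hpar
  exact hpar (dotProduct_zero _)

lemma beltrami2_fformIII_gaussMap (hx : ContDiffAt ℝ 3 x u)
    (himm : LinearIndependent ℝ ![pd 0 x u, pd 1 x u]) (hpar : (fformII x u).det ≠ 0) :
    beltrami2 (fformIII x) (gaussMap x) u = (2 : ℝ) • gaussMap x u := by
  have hunit : ∀ᶠ v in 𝓝 u, dot3 (gaussMap x v) (gaussMap x v) = 1 :=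
    (eventually_linearIndependent_pd (hx.of_le (by norm_num)) himm).mono
      fun _ => dot3_gaussMap_self
  rw [fformIII_eq_fformI_gaussMap]
  exact beltrami2_fformI_of_eventually_unit (contDiffAt_gaussMap hx (by norm_num) himm) hunit
    (linearIndependent_pd_gaussMap (hx.of_le (by norm_num)) himm hpar)

end ThirdFundamentalForm

theorem stmt16_general {x : Param → Vec3} {u : Param} (hx : ContDiffAt ℝ 3 x u)
    (himm : LinearIndependent ℝ ![pd 0 x u, pd 1 x u]) (hpar : (fformII x u).det ≠ 0) (ρ : ℝ) :
    beltrami2 (fformIII x) (fun v => x v + ρ • gaussMap x v) u =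
      beltrami2 (fformIII x) x u + (2 * ρ) • gaussMap x u := by
  have hx₂ : ContDiffAt ℝ 2 x u := hx.of_le (by norm_num)
  have hn : ContDiffAt ℝ 2 (gaussMap x) u := contDiffAt_gaussMap hx (by norm_num) himm
  have hdet : (fformIII x u).det ≠ 0 :=
    det_fformI_ne_zero (linearIndependent_pd_gaussMap hx₂ himm hpar)
  rw [beltrami2_add (a := fformIII x) (differentiableAt_fformI hn) hdet hx₂ (hn.const_smul ρ),
    beltrami2_const_smul, beltrami2_fformIII_gaussMap hx himm hpar, smul_smul, mul_comm ρ 2]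

/-- the parallel surface `x* = x + ρ n` satisfies
`Δ^{III} x* = Δ^{III} x + 2ρ n` on `U`, where `Δ^{III}` is the second Beltrami operator
of the common third fundamental form. -/
theorem stmt16 (U : Set Param) (x : Param → Vec3)
    (hU : IsOpen U) (hUconn : IsConnected U)
    (hx : ContDiffOn ℝ (⊤ : ℕ∞) x U) (himm : Immersed x U)
    (hpar : ∀ u ∈ U, (fformII x u).det ≠ 0)
    (ρ : ℝ) (hρ : ρ ≠ 0)
    (hreg : ∀ u ∈ U, 1 - 2 * ρ * meanCurv x u + ρ ^ 2 * gaussCurv x u ≠ 0) :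
    ∀ u ∈ U,
      beltrami2 (fformIII x) (fun v => x v + ρ • gaussMap x v) u =
        beltrami2 (fformIII x) x u + (2 * ρ) • gaussMap x u := by
  intro u hu
  have hxu : ContDiffAt ℝ 3 x u :=
    (hx.contDiffAt (hU.mem_nhds hu)).of_le (WithTop.coe_le_coe.mpr le_top)
  exact stmt16_general hxu (himm u hu) (hpar u hu) ρ
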